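/- arXiv:1706.01282 — 2 statements merged into one kernel-verified Lean document; each statement's English description precedes it below -/
import Mathlib

section
/- Fix an integer P ≥ 2 and integers p, q ≥ 0. There is a constant C = C(p,q,P) such that for every δ > 0 and every z ≥ 0, W_{p,δ}(z) · W_{q,δ}(z) ≤ C · W_{p+q,δ}(z). -/
open scoped ENNReal

/-- The boundary-layer weight `W_{p,δ}(z) = 1 + Σ_{q=1}^{p} δ^{−q} (1 + (z/δ)^{P−1+q})^{−1}`. -/
noncomputable def wt (P p : ℕ) (δ z : ℝ) : ℝ :=
  1 + ∑ q ∈ Finset.Icc 1 p, (δ ^ q)⁻¹ * (1 + (z / δ) ^ (P - 1 + q))⁻¹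

/-!
Put `a₀ = 1` and let `a₁, a₂, …` be the summands of the weight, so that `W_p = a₀ + ⋯ + a_p`.
With `t = z / δ` and `m = P - 1`, the inequality `a_i a_j ≤ a_{i+j}` amounts to
`1 + t ^ (m + i + j) ≤ (1 + t ^ (m + i)) (1 + t ^ (m + j))`, where `t ^ (m + i + j)` is dominated by
`t ^ (m + i)` if `t ≤ 1` and by the product `t ^ (2 * m + i + j)` if `t ≥ 1`. In the expansion of
`W_p W_q`, each of the `p + 1` rows `∑_{j ≤ q} a_i a_j ≤ ∑_{j ≤ q} a_{i+j}` is at most `W_{p+q}`.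
-/

open Finset

theorem sum_range_mul_sum_range_le {R : Type*} [Semiring R] [PartialOrder R] [IsOrderedRing R]
    {a : ℕ → R} (ha : ∀ k, 0 ≤ a k) (hmul : ∀ i j, a i * a j ≤ a (i + j)) (p q : ℕ) :
    (∑ i ∈ range (p + 1), a i) * ∑ j ∈ range (q + 1), a j ≤
      (p + 1) * ∑ k ∈ range (p + q + 1), a k := by
  have row_le (i : ℕ) (hi : i ∈ range (p + 1)) :
      ∑ j ∈ range (q + 1), a (i + j) ≤ ∑ k ∈ range (p + q + 1), a k := by
    have hsub : Ico i (i + (q + 1)) ⊆ range (p + q + 1) := by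
      intro k
      simp only [mem_range, mem_Ico] at hi ⊢
      lia
    calc ∑ j ∈ range (q + 1), a (i + j) = ∑ k ∈ Ico i (i + (q + 1)), a k := by
          rw [sum_Ico_eq_sum_range, Nat.add_sub_cancel_left]
      _ ≤ ∑ k ∈ range (p + q + 1), a k := sum_le_sum_of_subset_of_nonneg hsub fun k _ _ ↦ ha k
  calc (∑ i ∈ range (p + 1), a i) * ∑ j ∈ range (q + 1), a j
      = ∑ i ∈ range (p + 1), ∑ j ∈ range (q + 1), a i * a j := sum_mul_sum ..
    _ ≤ ∑ i ∈ range (p + 1), ∑ j ∈ range (q + 1), a (i + j) := by gcongr; exact hmul _ _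
    _ ≤ ∑ _i ∈ range (p + 1), ∑ k ∈ range (p + q + 1), a k := sum_le_sum row_le
    _ = (p + 1) * ∑ k ∈ range (p + q + 1), a k := by
      rw [sum_const, card_range, nsmul_eq_mul, Nat.cast_succ]

theorem one_add_pow_le_one_add_pow_mul_one_add_pow {R : Type*} [Semiring R] [LinearOrder R]
    [IsStrictOrderedRing R] {t : R} (ht : 0 ≤ t) (m i j : ℕ) :
    1 + t ^ (m + (i + j)) ≤ (1 + t ^ (m + i)) * (1 + t ^ (m + j)) := by
  have hi : 0 ≤ t ^ (m + i) := pow_nonneg ht _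
  have hj : 0 ≤ t ^ (m + j) := pow_nonneg ht _
  have pow_le : t ^ (m + (i + j)) ≤ t ^ (m + i) + t ^ (m + i) * t ^ (m + j) := by
    rcases le_total t 1 with ht1 | ht1
    · exact (pow_le_pow_of_le_one ht ht1 (by lia)).trans
        (le_add_of_nonneg_right (mul_nonneg hi hj))
    · rw [← pow_add]
      exact (pow_le_pow_right₀ ht1 (by lia)).trans (le_add_of_nonneg_left hi)
  calc 1 + t ^ (m + (i + j)) ≤ 1 + (t ^ (m + i) + t ^ (m + i) * t ^ (m + j)) := by gcongr
    _ ≤ 1 + (t ^ (m + i) + t ^ (m + i) * t ^ (m + j)) + t ^ (m + j) := le_add_of_nonneg_right hj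
    _ = (1 + t ^ (m + i)) * (1 + t ^ (m + j)) := by
      rw [one_add_mul, mul_one_add]
      abel

/-- The summands of the boundary-layer weight with `P = m + 1`. The constant `1` of the weight is
taken as the summand of index `0`; the formula for positive indices would give
`(1 + (z / δ) ^ m)⁻¹` there. -/
noncomputable def wtTerm (m : ℕ) (δ z : ℝ) : ℕ → ℝ
  | 0 => 1
  | k + 1 => (δ ^ (k + 1))⁻¹ * (1 + (z / δ) ^ (m + (k + 1)))⁻¹

theorem wt_succ_eq_sum_wtTerm (m p : ℕ) (δ z : ℝ) :
    wt (m + 1) p δ z = ∑ k ∈ range (p + 1), wtTerm m δ z k := by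
  rw [sum_range_succ', add_comm _ (wtTerm m δ z 0), wt, ← Ico_add_one_right_eq_Icc,
    sum_Ico_eq_sum_range]
  simp only [wtTerm, Nat.add_sub_cancel, Nat.add_comm 1]

section Nonneg

variable {δ z : ℝ}

theorem wtTerm_nonneg (m : ℕ) (hδ : 0 ≤ δ) (hz : 0 ≤ z) : ∀ k, 0 ≤ wtTerm m δ z k
  | 0 => zero_le_one
  | k + 1 => by rw [wtTerm]; positivity

theorem wtTerm_mul_wtTerm_le (m : ℕ) (hδ : 0 ≤ δ) (hz : 0 ≤ z) :
    ∀ i j, wtTerm m δ z i * wtTerm m δ z j ≤ wtTerm m δ z (i + j)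
  | 0, j => by rw [wtTerm, one_mul, zero_add]
  | i + 1, 0 => by rw [wtTerm.eq_1, mul_one, add_zero]
  | i + 1, j + 1 => by
    have ht : 0 ≤ z / δ := div_nonneg hz hδ
    calc wtTerm m δ z (i + 1) * wtTerm m δ z (j + 1)
        = (δ ^ (i + 1 + (j + 1)))⁻¹ *
            ((1 + (z / δ) ^ (m + (i + 1))) * (1 + (z / δ) ^ (m + (j + 1))))⁻¹ := by
          rw [wtTerm, wtTerm, pow_add δ (i + 1), mul_inv, mul_inv, mul_mul_mul_comm]
      _ ≤ (δ ^ (i + 1 + (j + 1)))⁻¹ * (1 + (z / δ) ^ (m + (i + 1 + (j + 1))))⁻¹ := by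
          gcongr
          exact one_add_pow_le_one_add_pow_mul_one_add_pow ht m (i + 1) (j + 1)
      _ = wtTerm m δ z (i + 1 + (j + 1)) := rfl

theorem weight_submultiplicative_general (m p q : ℕ) (hδ : 0 < δ) (hz : 0 ≤ z) :
    wt (m + 1) p δ z * wt (m + 1) q δ z ≤ (p + 1) * wt (m + 1) (p + q) δ z := by
  simp only [wt_succ_eq_sum_wtTerm]
  exact sum_range_mul_sum_range_le (wtTerm_nonneg m hδ.le hz) (wtTerm_mul_wtTerm_le m hδ.le hz) p q

end Nonneg

/-- the weights are submultiplicative up to a constant `C = C(p,q,P)`. -/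
theorem weight_submultiplicative (P : ℕ) (hP : 2 ≤ P) (p q : ℕ) :
    ∃ C : ℝ, 0 < C ∧ ∀ δ : ℝ, 0 < δ → ∀ z : ℝ, 0 ≤ z →
      wt P p δ z * wt P q δ z ≤ C * wt P (p + q) δ z := by
  obtain ⟨m, rfl⟩ := Nat.exists_eq_add_of_le' (one_le_two.trans hP)
  exact ⟨p + 1, by positivity, fun _ hδ _ hz ↦ weight_submultiplicative_general m p q hδ hz⟩
end

section
/- Fix an integer P ≥ 2 and let β ∈ (0, 1/2). There exists a constant C = C(β,P) such that for every real α with |α| ≥ 1, every δ ∈ (0,1], and every continuous f : [0,∞) → ℂ with ‖f‖_{β,δ,1} < ∞, the function φ(z) = −(1/(2|α|)) ∫₀^∞ ( e^{−|α||x−z|} − e^{−|α|(x+z)} ) f(x) dx, which is the decaying solution of φ'' − α²φ = f on (0,∞) with φ(0) = 0, satisfies |α| ‖φ‖_β + ‖φ'‖_β ≤ C ‖f‖_{β,δ,1}. In particular the constant C is independent of α and δ. -/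
open scoped ENNReal

/-- The boundary-layer norm `‖ω‖_{β,δ,p} = sup_{z≥0} W_{p,δ}(z)^{−1} e^{βz}|ω(z)|`. -/
noncomputable def blNorm (P : ℕ) (β δ : ℝ) (p : ℕ) (ω : ℝ → ℂ) : ℝ≥0∞ :=
  ⨆ z : Set.Ici (0:ℝ), ENNReal.ofReal ((wt P p δ z.1)⁻¹ * Real.exp (β * z.1) * ‖ω z.1‖)

/-- The exponentially weighted sup norm `‖g‖_β = sup_{z≥0} e^{βz}|g(z)|`. -/
noncomputable def expNorm (β : ℝ) (g : ℝ → ℂ) : ℝ≥0∞ :=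
  ⨆ z : Set.Ici (0:ℝ), ENNReal.ofReal (Real.exp (β * z.1) * ‖g z.1‖)

/-- The Green's function solution
`φ(z) = −(1/(2α)) ∫₀^∞ ( e^{−α|x−z|} − e^{−α(x+z)} ) f(x) dx` of `φ'' − α²φ = f`, `φ(0)=0`. -/
noncomputable def greenSol (α : ℝ) (f : ℝ → ℂ) (z : ℝ) : ℂ :=
  -(1 / (2 * (α:ℂ))) * ∫ x in Set.Ici (0:ℝ),
    ((Real.exp (-(α * |x - z|)) - Real.exp (-(α * (x + z))) : ℝ) : ℂ) * f x

/-!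
Only two facts about the Green kernel `G(z, x) = e^{-α|x - z|} - e^{-α(x + z)}` matter: on the
half-line `|G| ≤ e^{-α|x - z|}` and `|∂_z G| ≤ 2α e^{-α|x - z|}`. If `|β| + c ≤ α`, then
`e^{-α|x - z|} e^{-βx} ≤ e^{-βz} e^{-c|x - z|}`, so both estimates reduce to bounding
`∫ e^{-c|x - z|} W(x) dx` uniformly in `z` and `δ`. The constant part of `W` is integrated against
the exponential. In the layer part the exponential is bounded by `1`: as `P ≥ 2`, the layer has
mass of order `1` whatever its width `δ`. Since `G` is Lipschitz in `z` and differentiable off the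
diagonal `x = z`, `φ'` is obtained by differentiating under the integral.
-/

open MeasureTheory Set

section Weight

variable {P p : ℕ} {β δ x : ℝ}

lemma wt_pos (hδ : 0 < δ) (hx : 0 ≤ x) : 0 < wt P p δ x := by
  unfold wt
  positivity

lemma inv_one_add_pow_le {n : ℕ} (hn : 2 ≤ n) (hx : 0 ≤ x) :
    (1 + x ^ n)⁻¹ ≤ 2 * (1 + x ^ 2)⁻¹ := by
  have hxn : 0 ≤ x ^ n := by positivity
  rw [← div_eq_mul_inv, inv_eq_one_div, div_le_div_iff₀ (by positivity) (by positivity)]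
  rcases le_total x 1 with hx1 | hx1
  · linarith [pow_le_one₀ (n := 2) hx hx1]
  · linarith [pow_le_pow_right₀ hx1 hn]

lemma wt_one_le (hP : 2 ≤ P) (hδ : 0 < δ) (hx : 0 ≤ x) :
    wt P 1 δ x ≤ 1 + 2 * (δ⁻¹ * (1 + (x / δ) ^ 2)⁻¹) := by
  have hlayer := inv_one_add_pow_le hP (div_nonneg hx hδ.le)
  simp only [wt, Finset.Icc_self, Finset.sum_singleton, pow_one,
    Nat.sub_add_cancel (by omega : 1 ≤ P)]
  rw [mul_left_comm 2]
  gcongr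

lemma enorm_le_mul_blNorm (hδ : 0 < δ) (hx : 0 ≤ x) (ω : ℝ → ℂ) :
    ‖ω x‖ₑ ≤ ENNReal.ofReal (wt P p δ x * Real.exp (-(β * x))) * blNorm P β δ p ω := by
  have hwt : 0 < wt P p δ x := wt_pos hδ hx
  calc ‖ω x‖ₑ
      = ENNReal.ofReal (wt P p δ x * Real.exp (-(β * x))) *
          ENNReal.ofReal ((wt P p δ x)⁻¹ * Real.exp (β * x) * ‖ω x‖) := by
        rw [← ENNReal.ofReal_mul (by positivity), Real.exp_neg, ← ofReal_norm]
        congr 1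
        field_simp
    _ ≤ ENNReal.ofReal (wt P p δ x * Real.exp (-(β * x))) * blNorm P β δ p ω := by
        gcongr
        exact le_iSup (fun y : Ici (0 : ℝ) ↦
          ENNReal.ofReal ((wt P p δ y.1)⁻¹ * Real.exp (β * y.1) * ‖ω y.1‖)) ⟨x, hx⟩

lemma expNorm_le_of_enorm_le {g : ℝ → ℂ} {B : ℝ≥0∞}
    (hg : ∀ z, 0 ≤ z → ‖g z‖ₑ ≤ ENNReal.ofReal (Real.exp (-(β * z))) * B) : expNorm β g ≤ B := by
  refine iSup_le fun ⟨z, hz⟩ ↦ ?_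
  calc ENNReal.ofReal (Real.exp (β * z) * ‖g z‖)
      ≤ ENNReal.ofReal (Real.exp (β * z)) * (ENNReal.ofReal (Real.exp (-(β * z))) * B) := by
        rw [ENNReal.ofReal_mul (Real.exp_pos _).le, ofReal_norm]
        gcongr
        exact hg z hz
    _ = B := by
        rw [← mul_assoc, ← ENNReal.ofReal_mul (Real.exp_pos _).le, ← Real.exp_add, add_neg_cancel,
          Real.exp_zero, ENNReal.ofReal_one, one_mul]

end Weight

section Integrals

variable {P : ℕ} {α β c δ : ℝ}

lemma integral_exp_neg_mul_abs (hc : 0 < c) : ∫ x, Real.exp (-(c * |x|)) = 2 / c := by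
  rw [integral_comp_abs (f := fun x ↦ Real.exp (-(c * x)))]
  simp_rw [← neg_mul]
  rw [integral_exp_mul_Ioi (neg_lt_zero.2 hc)]
  simp [div_eq_mul_inv]

lemma lintegral_exp_neg_mul_abs_sub (hc : 0 < c) (z : ℝ) :
    ∫⁻ x, ENNReal.ofReal (Real.exp (-(c * |x - z|))) = ENNReal.ofReal (2 / c) := by
  have hint : Integrable fun x ↦ Real.exp (-(c * |x|)) :=
    .of_integral_ne_zero (by rw [integral_exp_neg_mul_abs hc]; positivity)
  rw [lintegral_sub_right_eq_self (fun x ↦ ENNReal.ofReal (Real.exp (-(c * |x|)))) z,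
    ← ofReal_integral_eq_lintegral_ofReal hint (.of_forall fun _ ↦ (Real.exp_pos _).le),
    integral_exp_neg_mul_abs hc]

lemma lintegral_inv_one_add_div_sq (hδ : 0 < δ) :
    ∫⁻ x, ENNReal.ofReal (δ⁻¹ * (1 + (x / δ) ^ 2)⁻¹) = ENNReal.ofReal Real.pi := by
  have hint : Integrable fun x ↦ δ⁻¹ * (1 + (x / δ) ^ 2)⁻¹ :=
    (integrable_inv_one_add_sq.comp_div hδ.ne').const_mul δ⁻¹
  rw [← ofReal_integral_eq_lintegral_ofReal hint (.of_forall fun _ ↦ by positivity),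
    integral_const_mul, Measure.integral_comp_div (fun x : ℝ ↦ (1 + x ^ 2)⁻¹) δ,
    integral_univ_inv_one_add_sq, smul_eq_mul, abs_of_pos hδ, inv_mul_cancel_left₀ hδ.ne']

lemma lintegral_exp_mul_wt_one_le (hP : 2 ≤ P) (hδ : 0 < δ) (hc : 0 < c) (z : ℝ) :
    ∫⁻ x in Ici 0, ENNReal.ofReal (Real.exp (-(c * |x - z|)) * wt P 1 δ x) ≤
      ENNReal.ofReal (2 * (1 / c + Real.pi)) := by
  have hpointwise : ∀ x ∈ Ici (0 : ℝ), Real.exp (-(c * |x - z|)) * wt P 1 δ x ≤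
      Real.exp (-(c * |x - z|)) + 2 * (δ⁻¹ * (1 + (x / δ) ^ 2)⁻¹) := fun x hx ↦ by
    have hexp : Real.exp (-(c * |x - z|)) ≤ 1 :=
      Real.exp_le_one_iff.2 (neg_nonpos.2 (by positivity))
    have hlayer : 0 ≤ 2 * (δ⁻¹ * (1 + (x / δ) ^ 2)⁻¹) := by positivity
    calc Real.exp (-(c * |x - z|)) * wt P 1 δ x
        ≤ Real.exp (-(c * |x - z|)) * (1 + 2 * (δ⁻¹ * (1 + (x / δ) ^ 2)⁻¹)) := by
          gcongr
          exact wt_one_le hP hδ hx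
      _ ≤ Real.exp (-(c * |x - z|)) + 2 * (δ⁻¹ * (1 + (x / δ) ^ 2)⁻¹) := by
          rw [mul_add, mul_one]
          exact add_le_add_right (mul_le_of_le_one_left hlayer hexp) _
  calc ∫⁻ x in Ici 0, ENNReal.ofReal (Real.exp (-(c * |x - z|)) * wt P 1 δ x)
      ≤ ∫⁻ x in Ici 0, (ENNReal.ofReal (Real.exp (-(c * |x - z|))) +
          ENNReal.ofReal 2 * ENNReal.ofReal (δ⁻¹ * (1 + (x / δ) ^ 2)⁻¹)) := by
        refine setLIntegral_mono (by fun_prop) fun x hx ↦ ?_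
        rw [← ENNReal.ofReal_mul zero_le_two, ← ENNReal.ofReal_add (by positivity) (by positivity)]
        exact ENNReal.ofReal_le_ofReal (hpointwise x hx)
    _ ≤ ∫⁻ x, (ENNReal.ofReal (Real.exp (-(c * |x - z|))) +
          ENNReal.ofReal 2 * ENNReal.ofReal (δ⁻¹ * (1 + (x / δ) ^ 2)⁻¹)) :=
        setLIntegral_le_lintegral _ _
    _ = ENNReal.ofReal (2 * (1 / c + Real.pi)) := by
        rw [lintegral_add_left (by fun_prop), lintegral_const_mul _ (by fun_prop),
          lintegral_exp_neg_mul_abs_sub hc, lintegral_inv_one_add_div_sq hδ,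
          ← ENNReal.ofReal_mul zero_le_two, ← ENNReal.ofReal_add (by positivity) (by positivity)]
        ring_nf

lemma exp_neg_mul_abs_sub_mul_exp_le (hβα : |β| + c ≤ α) (x z : ℝ) :
    Real.exp (-(α * |x - z|)) * Real.exp (-(β * x)) ≤
      Real.exp (-(β * z)) * Real.exp (-(c * |x - z|)) := by
  have hβ : β * (z - x) ≤ |β| * |x - z| := by
    rw [abs_sub_comm, ← abs_mul]
    exact le_abs_self _
  rw [← Real.exp_add, ← Real.exp_add, Real.exp_le_exp]
  linarith [mul_le_mul_of_nonneg_right hβα (abs_nonneg (x - z))]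

lemma lintegral_exp_mul_enorm_le (hP : 2 ≤ P) (hδ : 0 < δ) (hc : 0 < c) (hβα : |β| + c ≤ α)
    (f : ℝ → ℂ) (z : ℝ) :
    ∫⁻ x in Ici 0, ENNReal.ofReal (Real.exp (-(α * |x - z|))) * ‖f x‖ₑ ≤
      ENNReal.ofReal (Real.exp (-(β * z))) * ENNReal.ofReal (2 * (1 / c + Real.pi)) *
        blNorm P β δ 1 f := by
  have hpointwise : ∀ x ∈ Ici (0 : ℝ), ENNReal.ofReal (Real.exp (-(α * |x - z|))) * ‖f x‖ₑ ≤
      ENNReal.ofReal (Real.exp (-(β * z))) *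
        ENNReal.ofReal (Real.exp (-(c * |x - z|)) * wt P 1 δ x) * blNorm P β δ 1 f := fun x hx ↦ by
    refine (mul_le_mul_right (enorm_le_mul_blNorm (P := P) (p := 1) (β := β) hδ hx f) _).trans ?_
    rw [← mul_assoc, ← ENNReal.ofReal_mul (Real.exp_pos _).le,
      ← ENNReal.ofReal_mul (Real.exp_pos _).le]
    refine mul_le_mul_left (ENNReal.ofReal_le_ofReal ?_) _
    linarith [mul_le_mul_of_nonneg_right (exp_neg_mul_abs_sub_mul_exp_le hβα x z)
      (wt_pos (P := P) (p := 1) hδ hx).le]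
  have hwt : Measurable (wt P 1 δ) := by unfold wt; fun_prop
  refine (setLIntegral_mono (by fun_prop) hpointwise).trans ?_
  rw [lintegral_mul_const _ (by fun_prop), lintegral_const_mul _ (by fun_prop)]
  gcongr
  exact lintegral_exp_mul_wt_one_le hP hδ hc z

lemma integrableOn_exp_mul_norm (hP : 2 ≤ P) (hδ : 0 < δ) (hc : 0 < c) (hβα : |β| + c ≤ α)
    {f : ℝ → ℂ} (hf : AEStronglyMeasurable f (volume.restrict (Ici 0)))
    (hfin : blNorm P β δ 1 f ≠ ⊤) (z : ℝ) :
    IntegrableOn (fun x ↦ Real.exp (-(α * |x - z|)) * ‖f x‖) (Ici 0) := by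
  have hexp : Continuous fun x ↦ Real.exp (-(α * |x - z|)) := by fun_prop
  refine ⟨hexp.aestronglyMeasurable.mul hf.norm, ?_⟩
  simp_rw [HasFiniteIntegral, enorm_mul, enorm_norm, Real.enorm_of_nonneg (Real.exp_pos _).le]
  exact (lintegral_exp_mul_enorm_le hP hδ hc hβα f z).trans_lt
    (ENNReal.mul_lt_top (ENNReal.mul_lt_top ENNReal.ofReal_lt_top ENNReal.ofReal_lt_top)
      hfin.lt_top)

lemma expNorm_le_of_abs_kernel_le (hP : 2 ≤ P) (hδ : 0 < δ) (hc : 0 < c) (hβα : |β| + c ≤ α)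
    {f g : ℝ → ℂ} {k : ℝ → ℝ → ℝ} {b C : ℝ}
    (hk : ∀ z x, 0 ≤ z → 0 ≤ x → |k z x| ≤ C * Real.exp (-(α * |x - z|)))
    (hg : ∀ z, 0 ≤ z → g z = b * ∫ x in Ici 0, (k z x : ℂ) * f x) :
    expNorm β g ≤ ENNReal.ofReal (|b| * C * (2 * (1 / c + Real.pi))) * blNorm P β δ 1 f := by
  have hC : 0 ≤ C := by simpa using (abs_nonneg _).trans (hk 0 0 le_rfl le_rfl)
  refine expNorm_le_of_enorm_le fun z hz ↦ ?_
  have hpointwise : ∀ x ∈ Ici (0 : ℝ), ‖(k z x : ℂ) * f x‖ₑ ≤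
      ENNReal.ofReal C * (ENNReal.ofReal (Real.exp (-(α * |x - z|))) * ‖f x‖ₑ) := fun x hx ↦ by
    rw [enorm_mul, ← mul_assoc, ← ENNReal.ofReal_mul hC, ← ofReal_norm (k z x : ℂ),
      Complex.norm_real, Real.norm_eq_abs]
    gcongr
    exact hk z x hz hx
  calc ‖g z‖ₑ
      = ENNReal.ofReal |b| * ‖∫ x in Ici 0, (k z x : ℂ) * f x‖ₑ := by
        rw [hg z hz, enorm_mul, ← ofReal_norm (b : ℂ), Complex.norm_real, Real.norm_eq_abs]
    _ ≤ ENNReal.ofReal |b| * ∫⁻ x in Ici 0,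
          ENNReal.ofReal C * (ENNReal.ofReal (Real.exp (-(α * |x - z|))) * ‖f x‖ₑ) := by
        gcongr
        exact (enorm_integral_le_lintegral_enorm _).trans
          (setLIntegral_mono' measurableSet_Ici hpointwise)
    _ ≤ ENNReal.ofReal |b| * (ENNReal.ofReal C * (ENNReal.ofReal (Real.exp (-(β * z))) *
          ENNReal.ofReal (2 * (1 / c + Real.pi)) * blNorm P β δ 1 f)) := by
        rw [lintegral_const_mul' _ _ ENNReal.ofReal_ne_top]
        gcongr
        exact lintegral_exp_mul_enorm_le hP hδ hc hβα f z
    _ = ENNReal.ofReal (Real.exp (-(β * z))) *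
          (ENNReal.ofReal (|b| * C * (2 * (1 / c + Real.pi))) * blNorm P β δ 1 f) := by
        rw [ENNReal.ofReal_mul (p := |b| * C) (by positivity), ENNReal.ofReal_mul (abs_nonneg b)]
        ring

end Integrals

/-- The kernel `e^{-α|x - z|} - e^{-α(x + z)}` of `greenSol`, without the factor `-1 / (2α)`. -/
noncomputable def greenKernel (α z x : ℝ) : ℝ :=
  Real.exp (-(α * |x - z|)) - Real.exp (-(α * (x + z)))

/-- The derivative `∂_z` of `greenKernel α z x` off the diagonal; on the diagonal, where the kernel
has a corner, the value is the mean of the one-sided derivatives. -/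
noncomputable def greenKernelDeriv (α z x : ℝ) : ℝ :=
  α * (SignType.sign (x - z) * Real.exp (-(α * |x - z|)) + Real.exp (-(α * (x + z))))

section GreenKernel

variable {α x z : ℝ}

lemma exp_neg_mul_add_le (hα : 0 ≤ α) (hz : 0 ≤ z) (hx : 0 ≤ x) :
    Real.exp (-(α * (x + z))) ≤ Real.exp (-(α * |x - z|)) := by
  gcongr
  exact abs_le.2 ⟨by linarith, by linarith⟩

lemma abs_greenKernel_le (hα : 0 ≤ α) (hz : 0 ≤ z) (hx : 0 ≤ x) :
    |greenKernel α z x| ≤ Real.exp (-(α * |x - z|)) := by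
  rw [greenKernel, abs_of_nonneg (sub_nonneg.2 (exp_neg_mul_add_le hα hz hx))]
  linarith [Real.exp_pos (-(α * (x + z)))]

lemma abs_greenKernelDeriv_le (hα : 0 ≤ α) (hz : 0 ≤ z) (hx : 0 ≤ x) :
    |greenKernelDeriv α z x| ≤ 2 * α * Real.exp (-(α * |x - z|)) := by
  have hsign : |(SignType.sign (x - z) : ℝ)| ≤ 1 := by
    rcases lt_trichotomy (x - z) 0 with h | h | h <;> simp [h]
  have hdirect : |SignType.sign (x - z) * Real.exp (-(α * |x - z|))| ≤
      Real.exp (-(α * |x - z|)) := by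
    rw [abs_mul, Real.abs_exp]
    exact mul_le_of_le_one_left (Real.exp_pos _).le hsign
  have hreflected : |Real.exp (-(α * (x + z)))| ≤ Real.exp (-(α * |x - z|)) := by
    rw [Real.abs_exp]
    exact exp_neg_mul_add_le hα hz hx
  rw [greenKernelDeriv, abs_mul, abs_of_nonneg hα, mul_comm 2, mul_assoc, two_mul]
  gcongr
  exact (abs_add_le _ _).trans (add_le_add hdirect hreflected)

lemma hasDerivAt_greenKernel (α : ℝ) (hxz : x ≠ z) :
    HasDerivAt (fun w ↦ greenKernel α w x) (greenKernelDeriv α z x) z := by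
  have habs : HasDerivAt (fun w ↦ |x - w|) (SignType.sign (x - z) * -1) z :=
    (hasDerivAt_abs (sub_ne_zero.2 hxz)).comp z ((hasDerivAt_id z).const_sub x)
  have hadd : HasDerivAt (fun w ↦ x + w) 1 z := (hasDerivAt_id z).const_add x
  refine ((habs.const_mul α).neg.exp.sub (hadd.const_mul α).neg.exp).congr_deriv ?_
  simp only [greenKernelDeriv, Pi.neg_apply]
  ring

lemma continuous_greenKernel (α z : ℝ) : Continuous (greenKernel α z) := by
  unfold greenKernel
  fun_prop

lemma measurable_coe_sign : Measurable fun x : ℝ ↦ (SignType.sign x : ℝ) := by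
  simp only [sign_apply, apply_ite (SignType.cast : SignType → ℝ)]
  exact .ite (measurableSet_lt measurable_const measurable_id) measurable_const
    (.ite (measurableSet_lt measurable_id measurable_const) measurable_const measurable_const)

lemma measurable_greenKernelDeriv (α z : ℝ) : Measurable (greenKernelDeriv α z) := by
  have hsign : Measurable fun x : ℝ ↦ (SignType.sign (x - z) : ℝ) :=
    measurable_coe_sign.comp (measurable_id.sub_const z)
  unfold greenKernelDeriv
  fun_prop

lemma abs_exp_neg_sub_exp_neg_le {m s t : ℝ} (hs : m ≤ s) (ht : m ≤ t) :
    |Real.exp (-s) - Real.exp (-t)| ≤ Real.exp (-m) * |s - t| := by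
  wlog hst : s ≤ t generalizing s t
  · rw [abs_sub_comm, abs_sub_comm s]
    exact this ht hs (le_of_not_ge hst)
  have hexp : Real.exp (-t) ≤ Real.exp (-s) := by gcongr
  rw [abs_of_nonneg (sub_nonneg.2 hexp), abs_sub_comm, abs_of_nonneg (sub_nonneg.2 hst)]
  calc Real.exp (-s) - Real.exp (-t)
      = Real.exp (-s) * (1 - Real.exp (-(t - s))) := by
        rw [mul_sub, ← Real.exp_add]
        ring_nf
    _ ≤ Real.exp (-m) * (t - s) := by
        refine mul_le_mul (by gcongr) (by linarith [Real.one_sub_le_exp_neg (t - s)]) ?_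
          (Real.exp_pos _).le
        exact sub_nonneg.2 (Real.exp_le_one_iff.2 (by linarith))

lemma abs_greenKernel_sub_le {r w w' : ℝ} (hα : 0 ≤ α) (hz : 0 ≤ z) (hx : 0 ≤ x)
    (hw : |w - z| ≤ r) (hw' : |w' - z| ≤ r) :
    |greenKernel α w x - greenKernel α w' x| ≤
      2 * α * Real.exp (α * r) * Real.exp (-(α * |x - z|)) * |w - w'| := by
  have hdist {v : ℝ} (hv : |v - z| ≤ r) : |x - z| - r ≤ |x - v| := by
    linarith [abs_sub_le x v z]
  have hdist' {v : ℝ} (hv : |v - z| ≤ r) : |x - z| - r ≤ x + v := by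
    have hxz : |x - z| ≤ x + z := abs_le.2 ⟨by linarith, by linarith⟩
    linarith [neg_le_of_abs_le hv]
  have hdirect := abs_exp_neg_sub_exp_neg_le (mul_le_mul_of_nonneg_left (hdist hw) hα)
    (mul_le_mul_of_nonneg_left (hdist hw') hα)
  have hreflected := abs_exp_neg_sub_exp_neg_le (mul_le_mul_of_nonneg_left (hdist' hw) hα)
    (mul_le_mul_of_nonneg_left (hdist' hw') hα)
  have hlip : |α * |x - w| - α * (|x - w'|)| ≤ α * |w - w'| := by
    rw [← mul_sub, abs_mul, abs_of_nonneg hα]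
    refine mul_le_mul_of_nonneg_left ?_ hα
    simpa [abs_sub_comm] using abs_abs_sub_abs_le (x - w) (x - w')
  have hlip' : |α * (x + w) - α * (x + w')| = α * |w - w'| := by
    rw [← mul_sub, abs_mul, abs_of_nonneg hα, add_sub_add_left_eq_sub]
  have hexp : Real.exp (-(α * (|x - z| - r))) = Real.exp (α * r) * Real.exp (-(α * |x - z|)) := by
    rw [← Real.exp_add]
    ring_nf
  calc |greenKernel α w x - greenKernel α w' x|
      ≤ |Real.exp (-(α * |x - w|)) - Real.exp (-(α * |x - w'|))| +
          |Real.exp (-(α * (x + w))) - Real.exp (-(α * (x + w')))| := by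
        rw [greenKernel, greenKernel, sub_sub_sub_comm]
        exact abs_sub _ _
    _ ≤ Real.exp (-(α * (|x - z| - r))) * (α * |w - w'|) +
          Real.exp (-(α * (|x - z| - r))) * (α * |w - w'|) := by
        refine add_le_add (hdirect.trans ?_) (hreflected.trans_eq (by rw [hlip']))
        gcongr
    _ = 2 * α * Real.exp (α * r) * Real.exp (-(α * |x - z|)) * |w - w'| := by
        rw [hexp]
        ring

end GreenKernel

section GreenSolution

variable {P : ℕ} {α β c δ : ℝ} {f : ℝ → ℂ}

lemma hasDerivAt_greenSol {z : ℝ} (hα : 0 ≤ α) (hz : 0 ≤ z)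
    (hf : AEStronglyMeasurable f (volume.restrict (Ici 0)))
    (hint : IntegrableOn (fun x ↦ Real.exp (-(α * |x - z|)) * ‖f x‖) (Ici 0)) :
    HasDerivAt (greenSol α f)
      (-(1 / (2 * (α : ℂ))) * ∫ x in Ici 0, (greenKernelDeriv α z x : ℂ) * f x) z := by
  have hmeas (w : ℝ) : AEStronglyMeasurable (fun x ↦ (greenKernel α w x : ℂ) * f x)
      (volume.restrict (Ici 0)) :=
    (Complex.continuous_ofReal.comp (continuous_greenKernel α w)).aestronglyMeasurable.mul hf
  have hkernel : IntegrableOn (fun x ↦ (greenKernel α z x : ℂ) * f x) (Ici 0) := by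
    refine hint.mono' (hmeas z) ?_
    filter_upwards [ae_restrict_mem measurableSet_Ici] with x hx
    rw [norm_mul, Complex.norm_real]
    gcongr
    exact abs_greenKernel_le hα hz hx
  have hlip : ∀ᵐ x ∂volume.restrict (Ici (0 : ℝ)), LipschitzOnWith
      (Real.nnabs (2 * α * Real.exp (α * 1) * (Real.exp (-(α * |x - z|)) * ‖f x‖)))
      (fun w ↦ (greenKernel α w x : ℂ) * f x) (Metric.closedBall z 1) := by
    filter_upwards [ae_restrict_mem measurableSet_Ici] with x hx
    refine LipschitzOnWith.of_dist_le_mul fun w hw w' hw' ↦ ?_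
    rw [dist_eq_norm, ← sub_mul, norm_mul, ← Complex.ofReal_sub, Complex.norm_real,
      Real.coe_nnabs, abs_of_nonneg (by positivity), Real.dist_eq, Real.norm_eq_abs]
    linarith [mul_le_mul_of_nonneg_right (abs_greenKernel_sub_le hα hz hx hw hw')
      (norm_nonneg (f x))]
  have hdiff : ∀ᵐ x ∂volume.restrict (Ici (0 : ℝ)), HasDerivAt
      (fun w ↦ (greenKernel α w x : ℂ) * f x) ((greenKernelDeriv α z x : ℂ) * f x) z := by
    filter_upwards [Measure.ae_ne (volume.restrict (Ici 0)) z] with x hx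
    exact (hasDerivAt_greenKernel α hx).ofReal_comp.mul_const (f x)
  exact (hasDerivAt_integral_of_dominated_loc_of_lip (Metric.closedBall_mem_nhds z one_pos)
    (.of_forall hmeas) hkernel
    ((Complex.measurable_ofReal.comp (measurable_greenKernelDeriv α z)).aestronglyMeasurable.mul hf)
    hlip (hint.const_mul _) hdiff).2.const_mul _

lemma expNorm_greenSol_le (hP : 2 ≤ P) (hδ : 0 < δ) (hc : 0 < c) (hβα : |β| + c ≤ α) :
    expNorm β (greenSol α f) ≤
      ENNReal.ofReal ((1 / c + Real.pi) / α) * blNorm P β δ 1 f := by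
  have hα : 0 < α := by linarith [abs_nonneg β]
  refine (expNorm_le_of_abs_kernel_le hP hδ hc hβα (f := f) (k := greenKernel α)
    (b := -(1 / (2 * α))) (C := 1) (fun z x hz hx ↦ ?_) fun z _ ↦ ?_).trans_eq ?_
  · simpa using abs_greenKernel_le hα.le hz hx
  · push_cast
    rfl
  · rw [abs_neg, abs_of_pos (by positivity)]
    congr 2
    field_simp

lemma expNorm_derivWithin_greenSol_le (hP : 2 ≤ P) (hδ : 0 < δ) (hc : 0 < c) (hβα : |β| + c ≤ α)
    (hf : AEStronglyMeasurable f (volume.restrict (Ici 0))) (hfin : blNorm P β δ 1 f ≠ ⊤) :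
    expNorm β (derivWithin (greenSol α f) (Ici 0)) ≤
      ENNReal.ofReal (2 * (1 / c + Real.pi)) * blNorm P β δ 1 f := by
  have hα : 0 < α := by linarith [abs_nonneg β]
  refine (expNorm_le_of_abs_kernel_le hP hδ hc hβα (f := f) (k := greenKernelDeriv α)
    (b := -(1 / (2 * α))) (C := 2 * α)
    (fun z x hz hx ↦ abs_greenKernelDeriv_le hα.le hz hx) fun z hz ↦ ?_).trans_eq ?_
  · push_cast
    exact (hasDerivAt_greenSol hα.le hz hf
      (integrableOn_exp_mul_norm hP hδ hc hβα hf hfin z)).hasDerivWithinAt.derivWithin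
        (uniqueDiffOn_Ici 0 z hz)
  · rw [abs_neg, abs_of_pos (by positivity), one_div_mul_cancel (by positivity), one_mul]

end GreenSolution

theorem elliptic_estimate_bl_general {P : ℕ} (hP : 2 ≤ P) {α β c δ : ℝ} (hδ : 0 < δ) (hc : 0 < c)
    (hβα : |β| + c ≤ α) {f : ℝ → ℂ} (hf : AEStronglyMeasurable f (volume.restrict (Ici 0)))
    (hfin : blNorm P β δ 1 f ≠ ⊤) :
    ENNReal.ofReal α * expNorm β (greenSol α f) +
        expNorm β (derivWithin (greenSol α f) (Ici 0)) ≤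
      ENNReal.ofReal (3 * (1 / c + Real.pi)) * blNorm P β δ 1 f := by
  have hα : 0 < α := by linarith [abs_nonneg β]
  calc ENNReal.ofReal α * expNorm β (greenSol α f) +
        expNorm β (derivWithin (greenSol α f) (Ici 0))
      ≤ ENNReal.ofReal α * (ENNReal.ofReal ((1 / c + Real.pi) / α) * blNorm P β δ 1 f) +
          ENNReal.ofReal (2 * (1 / c + Real.pi)) * blNorm P β δ 1 f :=
        add_le_add (mul_le_mul_right (expNorm_greenSol_le hP hδ hc hβα) _)
          (expNorm_derivWithin_greenSol_le hP hδ hc hβα hf hfin)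
    _ = ENNReal.ofReal (3 * (1 / c + Real.pi)) * blNorm P β δ 1 f := by
        rw [← mul_assoc, ← ENNReal.ofReal_mul hα.le, ← add_mul,
          ← ENNReal.ofReal_add (by positivity) (by positivity), mul_div_cancel₀ _ hα.ne']
        ring_nf

/-- the elliptic estimate with boundary-layer data:
`|α|‖φ‖_β + ‖φ'‖_β ≤ C‖f‖_{β,δ,1}`, with `C = C(β,P)` independent of `α` and `δ`. -/
theorem elliptic_estimate_bl (P : ℕ) (hP : 2 ≤ P) (β : ℝ) (hβ0 : 0 < β) (hβ : β < 1/2) :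
    ∃ C : ℝ, 0 < C ∧ ∀ α : ℝ, 1 ≤ |α| → ∀ δ ∈ Set.Ioc (0:ℝ) 1, ∀ f : ℝ → ℂ,
      ContinuousOn f (Set.Ici 0) → blNorm P β δ 1 f < ⊤ →
      ENNReal.ofReal |α| * expNorm β (greenSol |α| f)
        + expNorm β (derivWithin (greenSol |α| f) (Set.Ici 0))
        ≤ ENNReal.ofReal C * blNorm P β δ 1 f := by
  have hc : 0 < 1 - β := by linarith
  exact ⟨3 * (1 / (1 - β) + Real.pi), by positivity, fun α hα δ hδ f hf hfin ↦
    elliptic_estimate_bl_general hP hδ.1 hc (by rwa [abs_of_pos hβ0, add_sub_cancel])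
      (hf.aestronglyMeasurable measurableSet_Ici) hfin.ne⟩
end
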